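/- Let I be an ideal on ℕ, let X be a regular topological space, let 𝓕 be a rough family on X all of whose members are closed sets, and let x : ℕ → X be a sequence such that {n : x n ∉ K} ∈ I for some compact set K ⊆ X. Then Γ_x(I) ≠ ∅ if and only if Γ_x(I,𝓕) ≠ ∅. -/

import Mathlib

open Set Filter Topology Metric

def IsIdeal (I : Set (Set ℕ)) : Prop :=
  (∀ A B : Set ℕ, A ⊆ B → B ∈ I → A ∈ I) ∧
  (∀ A B : Set ℕ, A ∈ I → B ∈ I → A ∪ B ∈ I) ∧
  (∀ A : Set ℕ, A.Finite → A ∈ I) ∧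
  (Set.univ : Set ℕ) ∉ I

def IsRoughFamily {X : Type*} (F : X → Set X) : Prop :=
  ∀ η : X, η ∈ F η

def RoughLim {X : Type*} [TopologicalSpace X] (I : Set (Set ℕ)) (F : X → Set X)
    (x : ℕ → X) : Set X :=
  {η : X | ∀ U : Set X, IsOpen U → F η ⊆ U → {n : ℕ | x n ∉ U} ∈ I}

def RoughLimStar {X : Type*} [TopologicalSpace X] (I : Set (Set ℕ)) (F : X → Set X)
    (x : ℕ → X) : Set X :=
  {η : X | ∃ S ∈ I, ∀ U : Set X, IsOpen U → F η ⊆ U → {n : ℕ | n ∉ S ∧ x n ∉ U}.Finite}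

def RoughCluster {X : Type*} [TopologicalSpace X] (I : Set (Set ℕ)) (F : X → Set X)
    (x : ℕ → X) : Set X :=
  {η : X | ∀ U : Set X, IsOpen U → F η ⊆ U → {n : ℕ | x n ∈ U} ∉ I}

def RoughLimitPts {X : Type*} [TopologicalSpace X] (I : Set (Set ℕ)) (F : X → Set X)
    (x : ℕ → X) : Set X :=
  {η : X | ∃ S : Set ℕ, S ∉ I ∧ ∀ U : Set X, IsOpen U → F η ⊆ U → {n ∈ S | x n ∉ U}.Finite}

def IClusterPts {X : Type*} [TopologicalSpace X] (I : Set (Set ℕ)) (x : ℕ → X) : Set X :=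
  RoughCluster I (fun η => {η}) x

def ILimitPts {X : Type*} [TopologicalSpace X] (I : Set (Set ℕ)) (x : ℕ → X) : Set X :=
  RoughLimitPts I (fun η => {η}) x

def IsPIdeal (I : Set (Set ℕ)) : Prop :=
  ∀ S : ℕ → Set ℕ, Monotone S → (∀ j, S j ∈ I) → ∃ T ∈ I, ∀ j, (S j \ T).Finite

def IsPPlusIdeal (I : Set (Set ℕ)) : Prop :=
  ∀ A : ℕ → Set ℕ, Antitone A → (∀ k, A k ∉ I) → ∃ B : Set ℕ, B ∉ I ∧ ∀ k, (B \ A k).Finite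

def HasUCProperty (X : Type*) [MetricSpace X] : Prop :=
  ∀ F G : Set X, IsClosed F → IsClosed G → F.Nonempty → G.Nonempty → Disjoint F G →
    ∃ ε : ℝ, 0 < ε ∧ ∀ x ∈ F, ∀ y ∈ G, ε < dist x y

def UpperVietorisContinuous {X : Type*} [TopologicalSpace X] (F : X → Set X) : Prop :=
  ∀ η : X, ∀ U : Set X, IsOpen U → F η ⊆ U →
    ∃ V : Set X, IsOpen V ∧ η ∈ V ∧ ∀ lam ∈ V, F lam ⊆ U

/-!
The complements of the members of an ideal `I` form a proper filter, and the `I`-cluster points of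
`x` are exactly its cluster points along this filter. A sequence lying in a compact set along a
proper filter has a cluster point there, and every classical cluster point is a rough one because
`η ∈ F η`. Hence both sets of cluster points are nonempty.
-/

namespace IsIdeal

variable {I : Set (Set ℕ)}

/-- The filter dual to the ideal `I`, consisting of the complements of the members of `I`. It
expresses `I`-cluster points of a sequence through Mathlib's `MapClusterPt`. -/
def dualFilter (hI : IsIdeal I) : Filter ℕ :=
  comk (· ∈ I) (hI.2.2.1 ∅ finite_empty) (fun B hB A hAB ↦ hI.1 A B hAB hB)
    (fun A hA B hB ↦ hI.2.1 A B hA hB)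

theorem eventually_dualFilter_iff (hI : IsIdeal I) {p : ℕ → Prop} :
    (∀ᶠ n in hI.dualFilter, p n) ↔ {n | ¬p n} ∈ I :=
  Iff.rfl

theorem frequently_dualFilter_iff (hI : IsIdeal I) {p : ℕ → Prop} :
    (∃ᶠ n in hI.dualFilter, p n) ↔ {n | p n} ∉ I := by
  simp only [Filter.Frequently, hI.eventually_dualFilter_iff, not_not]

theorem neBot_dualFilter (hI : IsIdeal I) : hI.dualFilter.NeBot :=
  (frequently_true_iff_neBot _).mp (hI.frequently_dualFilter_iff.mpr hI.2.2.2)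

end IsIdeal

section Cluster

variable {I : Set (Set ℕ)} {X : Type*} [TopologicalSpace X] {x : ℕ → X}

theorem roughCluster_mono {F G : X → Set X} (hFG : ∀ η, F η ⊆ G η) :
    RoughCluster I F x ⊆ RoughCluster I G x :=
  fun η hη U hU hGU ↦ hη U hU ((hFG η).trans hGU)

theorem iClusterPts_subset_roughCluster {F : X → Set X} (hF : IsRoughFamily F) :
    IClusterPts I x ⊆ RoughCluster I F x :=
  roughCluster_mono fun η ↦ singleton_subset_iff.mpr (hF η)

theorem mem_iClusterPts_iff_mapClusterPt (hI : IsIdeal I) {η : X} :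
    η ∈ IClusterPts I x ↔ MapClusterPt η hI.dualFilter x := by
  simp only [(nhds_basis_opens η).mapClusterPt_iff_frequently, hI.frequently_dualFilter_iff,
    IClusterPts, RoughCluster, mem_ofPred_eq, singleton_subset_iff, and_imp]
  exact forall_congr' fun _ ↦ forall_comm

theorem inter_iClusterPts_nonempty_of_isCompact (hI : IsIdeal I) {K : Set X} (hK : IsCompact K)
    (hxK : {n | x n ∈ K} ∉ I) : (K ∩ IClusterPts I x).Nonempty := by
  obtain ⟨η, hηK, hη⟩ :=
    hK.exists_mapClusterPt_of_frequently (hI.frequently_dualFilter_iff.mpr hxK)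
  exact ⟨η, hηK, (mem_iClusterPts_iff_mapClusterPt hI).mpr hη⟩

theorem iClusterPts_nonempty_of_isCompact (hI : IsIdeal I) {K : Set X} (hK : IsCompact K)
    (hxK : {n | x n ∉ K} ∈ I) : (IClusterPts I x).Nonempty := by
  have := hI.neBot_dualFilter
  have eventually_mem : ∀ᶠ n in hI.dualFilter, x n ∈ K := hI.eventually_dualFilter_iff.mpr hxK
  have positive : {n | x n ∈ K} ∉ I := hI.frequently_dualFilter_iff.mp eventually_mem.frequently
  exact (inter_iClusterPts_nonempty_of_isCompact hI hK positive).right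

end Cluster

theorem stmt5_general {X : Type*} [TopologicalSpace X]
    {I : Set (Set ℕ)} (hI : IsIdeal I)
    {F : X → Set X} (hF : IsRoughFamily F) {x : ℕ → X}
    {K : Set X} (hK : IsCompact K) (hxK : {n : ℕ | x n ∉ K} ∈ I) :
    (IClusterPts I x).Nonempty ∧ (RoughCluster I F x).Nonempty :=
  have nonempty := iClusterPts_nonempty_of_isCompact hI hK hxK
  ⟨nonempty, nonempty.mono (iClusterPts_subset_roughCluster hF)⟩

theorem stmt5 {X : Type*} [TopologicalSpace X] [RegularSpace X]
    (I : Set (Set ℕ)) (hI : IsIdeal I)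
    (F : X → Set X) (hF : IsRoughFamily F) (hFcl : ∀ η : X, IsClosed (F η))
    (x : ℕ → X)
    (K : Set X) (hK : IsCompact K) (hxK : {n : ℕ | x n ∉ K} ∈ I) :
    (IClusterPts I x).Nonempty ↔ (RoughCluster I F x).Nonempty :=
  have ⟨classical, rough⟩ := stmt5_general hI hF hK hxK
  iff_of_true classical rough
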